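/- Let U be a finite set, f : Finset U → ℝ monotone and submodular, κ ≥ 1 a natural number, OPT ⊆ U with |OPT| ≤ κ, α ∈ [0,1), ε ≥ 0, and w ∈ ℝ. Let S ⊆ U and s ∈ U satisfy Δf(S,s) ≥ w − ε, and suppose every o ∈ OPT \ S satisfies Δf(S,o) ≤ w/(1 − α) + ε. Then Δf(S,s) ≥ ((1 − α)/κ) · (f(OPT) − f(S)) − 2ε. -/

import Mathlib

/-!
By submodularity and monotonicity, the gap `f OPT - f S` is at most the sum of the marginal gains
over `S` of the at most `κ` elements of `OPT \ S`. Each of these gains is at most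
`w / (1 - α) + ε ≤ (D + ε) / (1 - α) + ε`, where `D` is the gain of the accepted element `s`.
Multiplying by `(1 - α) / κ` bounds the rescaled gap by `D + (2 - α) * ε`.
-/

section SetFunction

variable {U G : Type*} [DecidableEq U] [AddCommGroup G]

/-- The marginal gain `Δf(S, x)` of adding `x` to `S`, which is `0` when `x ∈ S` already. -/
def marginalGain (f : Finset U → G) (S : Finset U) (x : U) : G :=
  f (insert x S) - f S

variable [PartialOrder G]

/-- Submodularity of a set function, encoded as diminishing marginal gains. -/
def IsSubmodular (f : Finset U → G) : Prop :=
  ∀ ⦃X Y : Finset U⦄, X ⊆ Y → ∀ x ∉ Y, marginalGain f Y x ≤ marginalGain f X x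

variable [IsOrderedAddMonoid G] {f : Finset U → G}

theorem marginalGain_nonneg (hf : Monotone f) (S : Finset U) (x : U) :
    0 ≤ marginalGain f S x :=
  sub_nonneg.2 (hf (Finset.subset_insert x S))

namespace IsSubmodular

theorem union_sub_le_sum_marginalGain_of_disjoint (hf : IsSubmodular f) {S T : Finset U}
    (hST : Disjoint S T) : f (S ∪ T) - f S ≤ ∑ x ∈ T, marginalGain f S x := by
  induction T using Finset.induction_on with
  | empty => simp
  | insert a T haT ih =>
    obtain ⟨haS, hST⟩ := Finset.disjoint_insert_right.1 hST
    have ha : a ∉ S ∪ T := by simp [haS, haT]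
    calc f (S ∪ insert a T) - f S
        = marginalGain f (S ∪ T) a + (f (S ∪ T) - f S) := by
          rw [Finset.union_insert, marginalGain, sub_add_sub_cancel]
      _ ≤ marginalGain f S a + ∑ x ∈ T, marginalGain f S x :=
          add_le_add (hf Finset.subset_union_left a ha) (ih hST)
      _ = ∑ x ∈ insert a T, marginalGain f S x := (Finset.sum_insert haT).symm

theorem sub_le_sum_marginalGain (hf : IsSubmodular f) (hmono : Monotone f) (S T : Finset U) :
    f T - f S ≤ ∑ x ∈ T \ S, marginalGain f S x :=
  calc f T - f S ≤ f (S ∪ T \ S) - f S := by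
        rw [Finset.union_sdiff_self_eq_union]
        exact sub_le_sub_right (hmono Finset.subset_union_right) _
    _ ≤ ∑ x ∈ T \ S, marginalGain f S x :=
        hf.union_sub_le_sum_marginalGain_of_disjoint Finset.disjoint_sdiff

theorem sub_le_nsmul_of_marginalGain_le (hf : IsSubmodular f) (hmono : Monotone f)
    {S T : Finset U} {n : ℕ} (hT : T.card ≤ n) {c : G} (hc : 0 ≤ c)
    (hgain : ∀ x ∈ T \ S, marginalGain f S x ≤ c) : f T - f S ≤ n • c :=
  calc f T - f S ≤ ∑ x ∈ T \ S, marginalGain f S x := hf.sub_le_sum_marginalGain hmono S T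
    _ ≤ (T \ S).card • c := Finset.sum_le_card_nsmul _ _ _ hgain
    _ ≤ n • c := nsmul_le_nsmul_left hc ((Finset.card_le_card Finset.sdiff_subset).trans hT)

end IsSubmodular

end SetFunction

theorem threshold_greedy_step_general
    {U K : Type*} [DecidableEq U] [Field K] [LinearOrder K] [IsStrictOrderedRing K]
    {f : Finset U → K} (hmono : Monotone f) (hsub : IsSubmodular f)
    {κ : ℕ} (hκ : 1 ≤ κ) {OPT : Finset U} (hOPT : OPT.card ≤ κ)
    {α : K} (hα : α < 1) {ε : K} (hε : 0 ≤ ε) {w : K} {S : Finset U} {s : U}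
    (hs : w - ε ≤ marginalGain f S s)
    (hopt : ∀ o ∈ OPT \ S, marginalGain f S o ≤ w / (1 - α) + ε) :
    (1 - α) / κ * (f OPT - f S) - (2 - α) * ε ≤ marginalGain f S s := by
  set D := marginalGain f S s
  have hα_pos : 0 < 1 - α := sub_pos.2 hα
  have : (0 : K) < κ := Nat.cast_pos.2 hκ
  have hD : 0 ≤ D := marginalGain_nonneg hmono S s
  have hw : w ≤ D + ε := sub_le_iff_le_add.1 hs
  have hgain : ∀ o ∈ OPT \ S, marginalGain f S o ≤ (D + ε) / (1 - α) + ε := fun o ho =>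
    (hopt o ho).trans (add_le_add_left (div_le_div_of_nonneg_right hw hα_pos.le) ε)
  have hgap : f OPT - f S ≤ κ * ((D + ε) / (1 - α) + ε) := by
    simpa only [nsmul_eq_mul] using
      hsub.sub_le_nsmul_of_marginalGain_le hmono hOPT (by positivity) hgain
  calc (1 - α) / κ * (f OPT - f S) - (2 - α) * ε
      ≤ (1 - α) / κ * (κ * ((D + ε) / (1 - α) + ε)) - (2 - α) * ε := by gcongr
    _ = D := by field_simp; ring

/-- Per-step lemma for threshold greedy: an element accepted at threshold `w`
captures a `(1-α)/κ` fraction of the remaining optimum gap, up to `2ε`, given that optimal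
elements not yet chosen failed the previous threshold `w/(1-α)`. -/
theorem threshold_greedy_step
    {U : Type*} [Fintype U] [DecidableEq U]
    (f : Finset U → ℝ)
    (hmono : ∀ X Y : Finset U, X ⊆ Y → f X ≤ f Y)
    (hsub : ∀ X Y : Finset U, X ⊆ Y → ∀ x ∉ Y,
      f (insert x X) - f X ≥ f (insert x Y) - f Y)
    (κ : ℕ) (hκ : 1 ≤ κ)
    (OPT : Finset U) (hOPT : OPT.card ≤ κ)
    (α : ℝ) (hα0 : 0 ≤ α) (hα1 : α < 1)
    (ε : ℝ) (hε : 0 ≤ ε)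
    (w : ℝ) (S : Finset U) (s : U)
    (hs : f (insert s S) - f S ≥ w - ε)
    (hopt : ∀ o ∈ OPT \ S, f (insert o S) - f S ≤ w / (1 - α) + ε) :
    f (insert s S) - f S ≥ ((1 - α) / κ) * (f OPT - f S) - 2 * ε := by
  have hstep := threshold_greedy_step_general hmono hsub hκ hOPT hα1 hε hs hopt
  unfold marginalGain at hstep
  linarith [mul_nonneg hα0 hε]
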